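/- (Maximum principle for the fractional Laplacian.) Let n ≥ 1, s ∈ (0,1), let Ω ⊂ ℝⁿ be a bounded open set, and let u : ℝⁿ → ℝ be bounded and continuous. Assume that for every x ∈ Ω the function y ↦ (2u(x) − u(x+y) − u(x−y))/|y|^{n+2s} is Lebesgue integrable on ℝⁿ with ∫_{ℝⁿ} (2u(x) − u(x+y) − u(x−y))/|y|^{n+2s} dy ≥ 0 (i.e., (−Δ)^s u ≥ 0 in Ω), and that u(x) ≥ 0 for every x ∈ ℝⁿ ∖ Ω. Then u ≥ 0 on all of ℝⁿ. Moreover, if u(z) = 0 for some z ∈ Ω, then u ≡ 0 on ℝⁿ. -/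

import Mathlib

open MeasureTheory Filter Metric Set
open scoped Topology

/-!
Where `u` attains its global minimum, every second difference `2u(x) − u(x+y) − u(x−y)` is
nonpositive. If its integral against a positive kernel is nevertheless nonnegative, the second
difference vanishes for almost every `y`; both `u(x+y)` and `u(x−y)` then equal `u(x)`, and
semicontinuity makes `u` constant. A negative value of `u` would force a negative minimum, attained
inside `Ω`, so `u` would be a negative constant, contradicting `u ≥ 0` off `Ω`. An interior zero of
the now nonnegative `u` is again a global minimum.
-/

theorem le_of_ae_le_of_lowerSemicontinuous {X α : Type*} [TopologicalSpace X] [MeasurableSpace X]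
    {μ : Measure X} [μ.IsOpenPosMeasure] [LinearOrder α] {f : X → α} {c : α}
    (hf : LowerSemicontinuous f) (hle : ∀ᵐ x ∂μ, f x ≤ c) (x : X) : f x ≤ c := by
  have hclosed : IsClosed {x | f x ≤ c} := hf.isClosed_preimage c
  have hdense : Dense {x | f x ≤ c} := Measure.dense_of_ae hle
  exact hclosed.closure_subset (hdense x)

theorem exists_mem_forall_le_of_lt {X α : Type*} [TopologicalSpace X] [LinearOrder α]
    {f : X → α} {c : α} {Ω : Set X} (hΩ : IsCompact (closure Ω))
    (hf : LowerSemicontinuousOn f (closure Ω)) (hext : ∀ x ∉ Ω, c ≤ f x) {x : X} (hx : f x < c) :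
    ∃ m ∈ Ω, ∀ y, f m ≤ f y := by
  have mem_of_lt : ∀ y, f y < c → y ∈ Ω := fun y hy => by
    contrapose! hy
    exact hext y hy
  have hxΩ : x ∈ closure Ω := subset_closure (mem_of_lt x hx)
  obtain ⟨m, -, hm⟩ := hf.exists_isMinOn ⟨x, hxΩ⟩ hΩ
  have hmc : f m < c := (hm hxΩ).trans_lt hx
  refine ⟨m, mem_of_lt m hmc, fun y => ?_⟩
  by_cases hy : y ∈ Ω
  · exact hm (subset_closure hy)
  · exact hmc.le.trans (hext y hy)

section AddGroup

variable {E : Type*} [AddGroup E]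

/-- The symmetric second difference of `u` at `x` in the direction `y`, with the sign for which it
is nonpositive at a minimum. -/
def secondDiff (u : E → ℝ) (x y : E) : ℝ :=
  2 * u x - u (x + y) - u (x - y)

theorem secondDiff_nonpos_of_forall_le {u : E → ℝ} {x : E} (hmin : ∀ y, u x ≤ u y) (y : E) :
    secondDiff u x y ≤ 0 := by
  unfold secondDiff
  linarith [hmin (x + y), hmin (x - y)]

theorem apply_add_eq_of_secondDiff_eq_zero {u : E → ℝ} {x y : E} (hmin : ∀ y, u x ≤ u y)
    (h : secondDiff u x y = 0) : u (x + y) = u x := by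
  unfold secondDiff at h
  linarith [hmin (x + y), hmin (x - y)]

variable [MeasurableSpace E]

/-- `u` is a pointwise supersolution at `x` of the integro-differential equation `L u = 0`, where
`L u x = ∫ y, secondDiff u x y * K y ∂μ`. The kernel `K y = (‖y‖ ^ (n + 2 * s))⁻¹` on `ℝⁿ` gives a
positive multiple of the fractional Laplacian `(-Δ)^s`. Integrability is required, so that the sign
condition never concerns the default value of a divergent integral. -/
structure IsNonlocalSupersolutionAt (K : E → ℝ) (μ : Measure E) (u : E → ℝ) (x : E) : Prop where
  integrable : Integrable (fun y => secondDiff u x y * K y) μ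
  integral_nonneg : 0 ≤ ∫ y, secondDiff u x y * K y ∂μ

variable {μ : Measure E} {K : E → ℝ} {u : E → ℝ}

theorem isNonlocalSupersolutionAt_inv_iff {w : E → ℝ} {x : E} :
    IsNonlocalSupersolutionAt (fun y => (w y)⁻¹) μ u x ↔
      Integrable (fun y => (2 * u x - u (x + y) - u (x - y)) / w y) μ ∧
        0 ≤ ∫ y, (2 * u x - u (x + y) - u (x - y)) / w y ∂μ := by
  simp only [div_eq_mul_inv]
  exact ⟨fun h => ⟨h.integrable, h.integral_nonneg⟩, fun h => ⟨h.1, h.2⟩⟩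

theorem IsNonlocalSupersolutionAt.ae_apply_add_eq {x : E} (hK : ∀ y ≠ 0, 0 < K y)
    (hsup : IsNonlocalSupersolutionAt K μ u x) (hmin : ∀ y, u x ≤ u y) :
    ∀ᵐ y ∂μ, u (x + y) = u x := by
  have hnonpos : ∀ y, secondDiff u x y * K y ≤ 0 := fun y => by
    rcases eq_or_ne y 0 with rfl | hy
    · simp [secondDiff, two_mul]
    · exact mul_nonpos_of_nonpos_of_nonneg (secondDiff_nonpos_of_forall_le hmin y) (hK y hy).le
  have hintegral : ∫ y, secondDiff u x y * K y ∂μ = 0 :=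
    (integral_nonpos hnonpos).antisymm hsup.integral_nonneg
  have hzero : ∀ᵐ y ∂μ, -(secondDiff u x y * K y) = 0 :=
    (integral_eq_zero_iff_of_nonneg (fun y => neg_nonneg.2 (hnonpos y)) hsup.integrable.neg).1
      ((integral_neg _).trans (neg_eq_zero.2 hintegral))
  filter_upwards [hzero] with y hy
  rcases eq_or_ne y 0 with rfl | hy0
  · rw [add_zero]
  · exact apply_add_eq_of_secondDiff_eq_zero hmin
      ((mul_eq_zero_iff_right (hK y hy0).ne').1 (neg_eq_zero.1 hy))

variable [TopologicalSpace E] [ContinuousAdd E] [μ.IsOpenPosMeasure]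

theorem IsNonlocalSupersolutionAt.eq_of_forall_le {x : E} (hK : ∀ y ≠ 0, 0 < K y)
    (hu : LowerSemicontinuous u) (hsup : IsNonlocalSupersolutionAt K μ u x)
    (hmin : ∀ y, u x ≤ u y) (y : E) : u y = u x := by
  have hle : ∀ z, u (x + z) ≤ u x :=
    le_of_ae_le_of_lowerSemicontinuous (hu.comp (continuous_const_add x))
      ((hsup.ae_apply_add_eq hK hmin).mono fun _ hz => hz.le)
  refine le_antisymm ?_ (hmin y)
  simpa only [add_neg_cancel_left] using hle (-x + y)

theorem nonneg_of_isNonlocalSupersolutionAt {Ω : Set E} (hK : ∀ y ≠ 0, 0 < K y)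
    (hΩ : IsCompact (closure Ω)) (hΩc : Ωᶜ.Nonempty) (hu : LowerSemicontinuous u)
    (hsup : ∀ x ∈ Ω, IsNonlocalSupersolutionAt K μ u x) (hext : ∀ x ∉ Ω, 0 ≤ u x) (x : E) :
    0 ≤ u x := by
  by_contra! hx
  obtain ⟨m, hmΩ, hmin⟩ := exists_mem_forall_le_of_lt hΩ (hu.lowerSemicontinuousOn _) hext hx
  obtain ⟨p, hp⟩ := hΩc
  have hpm : u p = u m := (hsup m hmΩ).eq_of_forall_le hK hu hmin p
  linarith [hext p hp, hmin x]

theorem fractional_maximum_principle_general {Ω : Set E} (hK : ∀ y ≠ 0, 0 < K y)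
    (hΩ : IsCompact (closure Ω)) (hΩc : Ωᶜ.Nonempty) (hu : LowerSemicontinuous u)
    (hsup : ∀ x ∈ Ω, IsNonlocalSupersolutionAt K μ u x) (hext : ∀ x ∉ Ω, 0 ≤ u x) :
    (∀ x, 0 ≤ u x) ∧ (∀ z ∈ Ω, u z = 0 → ∀ x, u x = 0) := by
  have hnonneg := nonneg_of_isNonlocalSupersolutionAt hK hΩ hΩc hu hsup hext
  refine ⟨hnonneg, fun z hz hz0 x => ?_⟩
  rw [(hsup z hz).eq_of_forall_le hK hu (fun y => hz0 ▸ hnonneg y) x, hz0]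

end AddGroup

theorem nonempty_compl_of_isBounded {E : Type*} [NormedAddCommGroup E] [NormedSpace ℝ E]
    [Nontrivial E] {Ω : Set E} (hΩ : Bornology.IsBounded Ω) : Ωᶜ.Nonempty :=
  nonempty_compl.2 fun h => NormedSpace.unbounded_univ ℝ E (h ▸ hΩ)

/-- Maximum principle for the fractional Laplacian.  If `Ω ⊂ ℝⁿ`
is bounded and open, `u` is bounded and continuous, `(−Δ)^s u ≥ 0` in `Ω` (in
the absolutely convergent second-difference sense) and `u ≥ 0` outside `Ω`,
then `u ≥ 0` everywhere; moreover if `u` vanishes at some point of `Ω` then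
`u ≡ 0`. -/
theorem fractional_maximum_principle
    (n : ℕ) (hn : 1 ≤ n) (s : ℝ) (hs : s ∈ Set.Ioo (0:ℝ) 1)
    (Ω : Set (EuclideanSpace ℝ (Fin n))) (hΩo : IsOpen Ω) (hΩb : Bornology.IsBounded Ω)
    (u : EuclideanSpace ℝ (Fin n) → ℝ)
    (hbdd : ∃ M : ℝ, ∀ x, |u x| ≤ M) (hcont : Continuous u)
    (hsup : ∀ x ∈ Ω,
      MeasureTheory.Integrable (fun y : EuclideanSpace ℝ (Fin n) =>
        (2 * u x - u (x + y) - u (x - y)) / ‖y‖ ^ ((n : ℝ) + 2 * s)) ∧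
      0 ≤ ∫ y : EuclideanSpace ℝ (Fin n),
        (2 * u x - u (x + y) - u (x - y)) / ‖y‖ ^ ((n : ℝ) + 2 * s))
    (hext : ∀ x ∉ Ω, 0 ≤ u x) :
    (∀ x, 0 ≤ u x) ∧ (∀ z ∈ Ω, u z = 0 → ∀ x, u x = 0) := by
  have : Nonempty (Fin n) := ⟨⟨0, hn⟩⟩
  exact fractional_maximum_principle_general
    (fun y hy => inv_pos.2 (Real.rpow_pos_of_pos (norm_pos_iff.2 hy) _))
    hΩb.isCompact_closure (nonempty_compl_of_isBounded hΩb) hcont.lowerSemicontinuous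
    (fun x hx => isNonlocalSupersolutionAt_inv_iff.2 (hsup x hx)) hext
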